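/- Let p > 1 and let Λ ⊆ ℝ² be a critical lattice of D_p (an admissible lattice with covolume Δ(D_p)). Then the set of points of Λ lying on the Minkowski curve |x|^p + |y|^p = 1 has exactly 6 elements. -/

import Mathlib

open scoped Pointwise

/-- The open Minkowski ball `D_p = {(x,y) : |x|^p + |y|^p < 1}` in `ℝ²`. -/
def ballD (p : ℝ) : Set (ℝ × ℝ) :=
  {v : ℝ × ℝ | |v.1| ^ p + |v.2| ^ p < 1}

/-- The Minkowski curve `C_p = {(x,y) : |x|^p + |y|^p = 1}`, the boundary of `D_p`. -/
def curveC (p : ℝ) : Set (ℝ × ℝ) :=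
  {v : ℝ × ℝ | |v.1| ^ p + |v.2| ^ p = 1}

/-- The lattice (ℤ-span) generated by two vectors `a b : ℝ²`. -/
def latticeSet (a b : ℝ × ℝ) : Set (ℝ × ℝ) :=
  {v : ℝ × ℝ | ∃ m n : ℤ, v = (m : ℝ) • a + (n : ℝ) • b}

/-- The determinant of the 2×2 matrix with rows `a` and `b`. -/
def det2 (a b : ℝ × ℝ) : ℝ := a.1 * b.2 - a.2 * b.1

/-- A lattice with basis `a, b` is admissible for `D` if it meets `D` at most in `0`. -/
def IsAdmissible (D : Set (ℝ × ℝ)) (a b : ℝ × ℝ) : Prop :=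
  latticeSet a b ∩ D ⊆ {0}

/-- The critical determinant `Δ(D)`: the infimum of covolumes `|det(a,b)|` over all
full-rank lattices `ℤa + ℤb` admissible for `D` (with value `∞` if none exists). -/
noncomputable def criticalDet (D : Set (ℝ × ℝ)) : ENNReal :=
  sInf {d : ENNReal | ∃ a b : ℝ × ℝ, LinearIndependent ℝ ![a, b] ∧
    IsAdmissible D a b ∧ d = ENNReal.ofReal |det2 a b|}


/-- the `p`-norm -/
noncomputable def nrm (p : ℝ) (v : ℝ × ℝ) : ℝ := (|v.1| ^ p + |v.2| ^ p) ^ (1 / p)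

lemma nrm_pow {p : ℝ} (hp : 1 < p) (v : ℝ × ℝ) : nrm p v ^ p = |v.1| ^ p + |v.2| ^ p := by
  unfold nrm
  rw [← Real.rpow_mul (by positivity), one_div_mul_cancel (by linarith), Real.rpow_one]

lemma nrm_nonneg (p : ℝ) (v : ℝ × ℝ) : 0 ≤ nrm p v := by
  unfold nrm; positivity

lemma nrm_add {p : ℝ} (hp : 1 < p) (v w : ℝ × ℝ) : nrm p (v + w) ≤ nrm p v + nrm p w := by
  have h := Real.Lp_add_le (Finset.univ : Finset (Fin 2)) ![v.1, v.2] ![w.1, w.2] hp.le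
  simpa [nrm, Fin.sum_univ_two] using h

lemma nrm_smul {p : ℝ} (hp : 1 < p) (c : ℝ) (v : ℝ × ℝ) : nrm p (c • v) = |c| * nrm p v := by
  unfold nrm
  have : |(c • v).1| ^ p + |(c • v).2| ^ p = |c| ^ p * (|v.1| ^ p + |v.2| ^ p) := by
    simp only [Prod.smul_fst, Prod.smul_snd, smul_eq_mul, abs_mul]
    rw [Real.mul_rpow (abs_nonneg _) (abs_nonneg _), Real.mul_rpow (abs_nonneg _) (abs_nonneg _)]
    ring
  rw [this, Real.mul_rpow (by positivity) (by positivity), ← Real.rpow_mul (abs_nonneg _),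
    mul_one_div_cancel (by linarith), Real.rpow_one]

lemma nrm_neg {p : ℝ} (hp : 1 < p) (v : ℝ × ℝ) : nrm p (-v) = nrm p v := by
  have := nrm_smul hp (-1) v
  simpa using this

lemma le_nrm {p : ℝ} (hp : 1 < p) (v : ℝ × ℝ) : |v.1| ≤ nrm p v ∧ |v.2| ≤ nrm p v := by
  have h := nrm_pow hp v
  have h1 : 0 ≤ |v.1| ^ p := by positivity
  have h2 : 0 ≤ |v.2| ^ p := by positivity
  constructor
  · rw [← Real.rpow_le_rpow_iff (abs_nonneg _) (nrm_nonneg p v) (by linarith : 0 < p)]; linarith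
  · rw [← Real.rpow_le_rpow_iff (abs_nonneg _) (nrm_nonneg p v) (by linarith : 0 < p)]; linarith

lemma nrm_pos {p : ℝ} (hp : 1 < p) {v : ℝ × ℝ} (hv : v ≠ 0) : 0 < nrm p v := by
  rcases (nrm_nonneg p v).lt_or_eq with h | h
  · exact h
  · exfalso
    obtain ⟨h1, h2⟩ := le_nrm hp v
    rw [← h] at h1 h2
    exact hv (Prod.ext (abs_nonpos_iff.1 h1) (abs_nonpos_iff.1 h2))

lemma abs_mid {p : ℝ} (hp : 1 < p) (x y : ℝ) (hxy : x ≠ y) :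
    |(x + y) / 2| ^ p < (|x| ^ p + |y| ^ p) / 2 := by
  have h2 : |(x + y) / 2| = |x + y| / 2 := by rw [abs_div]; norm_num
  by_cases h : |x| = |y|
  · have h' : x = -y := (abs_eq_abs.1 h).resolve_left hxy
    have hy : y ≠ 0 := by rintro rfl; simp at h'; exact hxy h'
    subst h'
    have : 0 < |y| ^ p := Real.rpow_pos_of_pos (abs_pos.2 hy) p
    simp only [neg_add_cancel, zero_div, abs_zero, abs_neg]
    rw [Real.zero_rpow (by linarith)]; linarith
  · have h3 := (strictConvexOn_rpow hp).2 (Set.mem_Ici.2 (abs_nonneg x))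
      (Set.mem_Ici.2 (abs_nonneg y)) h (by norm_num : (0:ℝ) < 1/2) (by norm_num : (0:ℝ) < 1/2)
      (by norm_num)
    simp only [smul_eq_mul] at h3
    have h4 : |(x + y) / 2| ^ p ≤ (1/2 * |x| + 1/2 * |y|) ^ p := by
      apply Real.rpow_le_rpow (abs_nonneg _) _ (by linarith)
      rw [h2]; linarith [abs_add_le x y]
    linarith

lemma abs_mid_le {p : ℝ} (hp : 1 < p) (x y : ℝ) :
    |(x + y) / 2| ^ p ≤ (|x| ^ p + |y| ^ p) / 2 := by
  by_cases h : x = y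
  · subst h; simp
  · exact (abs_mid hp x y h).le

lemma nrm_mid {p : ℝ} (hp : 1 < p) {x y : ℝ × ℝ} (hxy : x ≠ y) {r : ℝ}
    (hx : nrm p x ≤ r) (hy : nrm p y ≤ r) : nrm p ((1/2 : ℝ) • (x + y)) < r := by
  have hr : 0 ≤ r := (nrm_nonneg p x).trans hx
  have hp0 : 0 < p := by linarith
  rw [← Real.rpow_lt_rpow_iff (nrm_nonneg p _) hr hp0, nrm_pow hp]
  have hx' := Real.rpow_le_rpow (nrm_nonneg p x) hx hp0.le
  have hy' := Real.rpow_le_rpow (nrm_nonneg p y) hy hp0.le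
  rw [nrm_pow hp] at hx' hy'
  have e1 : ((1/2 : ℝ) • (x + y)).1 = (x.1 + y.1) / 2 := by simp; ring
  have e2 : ((1/2 : ℝ) • (x + y)).2 = (x.2 + y.2) / 2 := by simp; ring
  rw [e1, e2]
  have l1 := abs_mid_le hp x.1 y.1
  have l2 := abs_mid_le hp x.2 y.2
  by_cases h : x.1 = y.1
  · have h2 : x.2 ≠ y.2 := fun h2 => hxy (Prod.ext h h2)
    have := abs_mid hp _ _ h2
    linarith
  · have := abs_mid hp _ _ h
    linarith

lemma mem_ballD_iff {p : ℝ} (hp : 1 < p) (v : ℝ × ℝ) : v ∈ ballD p ↔ nrm p v < 1 := by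
  rw [← Real.rpow_lt_rpow_iff (nrm_nonneg p _) zero_le_one (by linarith : 0 < p), nrm_pow hp,
    Real.one_rpow]; rfl

lemma mem_curveC_iff {p : ℝ} (hp : 1 < p) (v : ℝ × ℝ) : v ∈ curveC p ↔ nrm p v = 1 := by
  rw [← Real.rpow_left_inj (nrm_nonneg p _) zero_le_one (by linarith : p ≠ 0), nrm_pow hp,
    Real.one_rpow]; rfl

lemma det2_bound {p : ℝ} (hp : 1 < p) (u w : ℝ × ℝ) :
    |det2 u w| ≤ (|u.1| + |u.2|) * nrm p w := by
  obtain ⟨h1, h2⟩ := le_nrm hp w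
  unfold det2
  calc |u.1 * w.2 - u.2 * w.1| ≤ |u.1 * w.2| + |u.2 * w.1| := abs_sub _ _
    _ = |u.1| * |w.2| + |u.2| * |w.1| := by rw [abs_mul, abs_mul]
    _ ≤ |u.1| * nrm p w + |u.2| * nrm p w := by gcongr
    _ = _ := by ring

lemma li_iff (a b : ℝ × ℝ) : LinearIndependent ℝ ![a, b] ↔ det2 a b ≠ 0 := by
  rw [LinearIndependent.pair_iff]
  unfold det2
  constructor
  · intro h h0
    have h1 := h b.2 (-a.2) (by ext <;> simp <;> linarith)
    have h2 := h b.1 (-a.1) (by ext <;> simp <;> linarith)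
    have h3 := h 1 0 (by
      ext
      · simp; linarith [h2.2]
      · simp; linarith [h1.2])
    exact one_ne_zero h3.1
  · intro h s t hst
    have e1 := congrArg Prod.fst hst
    have e2 := congrArg Prod.snd hst
    simp at e1 e2
    constructor
    · have : s * (a.1 * b.2 - a.2 * b.1) = 0 := by linear_combination b.2 * e1 - b.1 * e2
      exact (mul_eq_zero.1 this).resolve_right h
    · have : t * (a.1 * b.2 - a.2 * b.1) = 0 := by linear_combination a.1 * e2 - a.2 * e1
      exact (mul_eq_zero.1 this).resolve_right h

lemma finite_lattice {p : ℝ} (hp : 1 < p) {a b : ℝ × ℝ} (hd : det2 a b ≠ 0) (R : ℝ) :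
    {w | w ∈ latticeSet a b ∧ nrm p w ≤ R}.Finite := by
  obtain ⟨M, hM⟩ := exists_nat_ge ((|b.1| + |b.2|) * R / |det2 a b|)
  obtain ⟨K, hK⟩ := exists_nat_ge ((|a.1| + |a.2|) * R / |det2 a b|)
  have hd' : 0 < |det2 a b| := abs_pos.2 hd
  rw [div_le_iff₀ hd'] at hM hK
  apply Set.Finite.subset (((Set.finite_Icc (-(M:ℤ)) M).prod (Set.finite_Icc (-(K:ℤ)) K)).image
    (fun q : ℤ × ℤ => (q.1 : ℝ) • a + (q.2 : ℝ) • b))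
  rintro w ⟨⟨m, n, rfl⟩, hw⟩
  refine ⟨(m, n), ?_, rfl⟩
  have h1 := det2_bound hp b ((m : ℝ) • a + (n : ℝ) • b)
  have h2 := det2_bound hp a ((m : ℝ) • a + (n : ℝ) • b)
  have e1 : det2 b ((m : ℝ) • a + (n : ℝ) • b) = -(m * det2 a b) := by simp [det2]; ring
  have e2 : det2 a ((m : ℝ) • a + (n : ℝ) • b) = n * det2 a b := by simp [det2]; ring
  rw [e1, abs_neg, abs_mul] at h1
  rw [e2, abs_mul] at h2
  have h3 : |(m:ℝ)| * |det2 a b| ≤ M * |det2 a b| :=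
    h1.trans ((mul_le_mul_of_nonneg_left hw (by positivity)).trans hM)
  have h4 : |(n:ℝ)| * |det2 a b| ≤ K * |det2 a b| :=
    h2.trans ((mul_le_mul_of_nonneg_left hw (by positivity)).trans hK)
  have h5 := abs_le.1 (le_of_mul_le_mul_right h3 hd')
  have h6 := abs_le.1 (le_of_mul_le_mul_right h4 hd')
  simp only [Set.mem_prod, Set.mem_Icc]
  exact ⟨⟨by exact_mod_cast h5.1, by exact_mod_cast h5.2⟩,
    ⟨by exact_mod_cast h6.1, by exact_mod_cast h6.2⟩⟩

lemma gap {p : ℝ} (hp : 1 < p) {a b : ℝ × ℝ} (hd : det2 a b ≠ 0) :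
    ∃ r : ℝ, 1 < r ∧ ∀ w ∈ latticeSet a b, 1 < nrm p w → r ≤ nrm p w := by
  have hf : ({w | w ∈ latticeSet a b ∧ nrm p w ≤ 2} ∩ {w | 1 < nrm p w}).Finite :=
    (finite_lattice hp hd 2).inter_of_left _
  rcases Set.eq_empty_or_nonempty ({w | w ∈ latticeSet a b ∧ nrm p w ≤ 2} ∩ {w | 1 < nrm p w})
    with h | h
  · refine ⟨2, by norm_num, fun w hw h1 => ?_⟩
    by_contra! h2
    have : w ∈ ({w | w ∈ latticeSet a b ∧ nrm p w ≤ 2} ∩ {w | 1 < nrm p w}) :=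
      ⟨⟨hw, h2.le⟩, h1⟩
    rw [h] at this; exact this
  · obtain ⟨w0, ⟨⟨_, h2⟩, h1⟩, hmin⟩ := Set.exists_min_image _ (nrm p) hf h
    refine ⟨nrm p w0, h1, fun w hw h1 => ?_⟩
    by_cases h3 : nrm p w ≤ 2
    · exact hmin w ⟨⟨hw, h3⟩, h1⟩
    · linarith

/-- Moving `v` along its norm sphere so that `det (u, v)` shrinks. -/
lemma move {p : ℝ} (hp : 1 < p) {u v : ℝ × ℝ} (hu : u ≠ 0) (hv : v ≠ 0) {δ : ℝ} (hδ : 0 < δ) :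
    ∃ s t : ℝ, 0 < s ∧ s < 1 ∧ nrm p (s • (v + t • u)) = nrm p v ∧
      nrm p (s • (v + t • u) - v) ≤ δ := by
  have hup := nrm_pos hp hu
  have hvp := nrm_pos hp hv
  obtain ⟨t, ht, hlt⟩ : ∃ t : ℝ, |t| = δ / (2 * nrm p u) ∧ nrm p v < nrm p (v + t • u) := by
    have ht0 : 0 < δ / (2 * nrm p u) := by positivity
    set t := δ / (2 * nrm p u)
    by_contra! hcon
    have h1 := hcon t (abs_of_pos ht0)
    have h2 := hcon (-t) (by rw [abs_neg, abs_of_pos ht0])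
    have hne : v + t • u ≠ v + (-t) • u := by
      intro h
      have h3 := add_left_cancel h
      have h4 : (2 * t) • u = 0 := by
        rw [two_mul, add_smul]; nth_rewrite 1 [h3]; simp
      rcases smul_eq_zero.1 h4 with h | h
      · linarith
      · exact hu h
    have h3 := nrm_mid hp hne h1 h2
    have h4 : (1/2 : ℝ) • (v + t • u + (v + (-t) • u)) = v := by
      ext <;> simp <;> ring
    rw [h4] at h3; exact lt_irrefl _ h3
  have hq : 0 < nrm p (v + t • u) := hvp.trans hlt
  have htu : |t| * nrm p u = δ / 2 := by rw [ht]; field_simp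
  refine ⟨nrm p v / nrm p (v + t • u), t, by positivity, (div_lt_one hq).2 hlt, ?_, ?_⟩
  · rw [nrm_smul hp, abs_of_pos (by positivity)]; field_simp
  · set s := nrm p v / nrm p (v + t • u) with hs
    have hs1 : s < 1 := (div_lt_one hq).2 hlt
    have hs0 : 0 < s := by positivity
    have hsq : s * nrm p (v + t • u) = nrm p v := by rw [hs]; field_simp
    have e : s • (v + t • u) - v = (s - 1) • v + (s * t) • u := by ext <;> simp <;> ring
    have h1 := nrm_add hp ((s - 1) • v) ((s * t) • u)
    rw [nrm_smul hp, nrm_smul hp, abs_mul, abs_of_pos hs0, abs_of_neg (by linarith)] at h1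
    rw [e]
    have h2 := nrm_add hp v (t • u)
    rw [nrm_smul hp] at h2
    have h3 : s * (|t| * nrm p u) ≤ 1 * (|t| * nrm p u) := by gcongr
    have h4 : s * nrm p (v + t • u) ≤ s * (nrm p v + |t| * nrm p u) := by gcongr
    nlinarith

lemma key {p : ℝ} (hp : 1 < p) {a b : ℝ × ℝ} (hd : det2 a b ≠ 0)
    (hadm : IsAdmissible (ballD p) a b)
    (hcrit : ENNReal.ofReal |det2 a b| = criticalDet (ballD p))
    {u v : ℝ × ℝ} (huv : det2 u v ≠ 0) :
    ∃ w ∈ latticeSet a b ∩ curveC p, w ≠ u ∧ w ≠ -u ∧ w ≠ v ∧ w ≠ -v := by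
  by_contra! hcon
  have hu : u ≠ 0 := by rintro rfl; simp [det2] at huv
  have hv : v ≠ 0 := by rintro rfl; simp [det2] at huv
  obtain ⟨r, hr1, hr⟩ := gap hp hd
  set C := (|u.1| + |u.2|) / |det2 u v| with hC
  have hC0 : 0 ≤ C := by positivity
  have hdu : 0 < |det2 u v| := abs_pos.2 huv
  obtain ⟨s, t, hs0, hs1, hn, hδ⟩ := move hp hu hv
    (δ := (1 - 1 / r) / (C + 1)) (by
      apply div_pos _ (by linarith)
      rw [sub_pos, div_lt_one (by linarith)]; exact hr1)
  set v' := s • (v + t • u) with hv'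
  set T : ℝ × ℝ → ℝ × ℝ := fun w => w + (det2 u w / det2 u v) • (v' - v) with hT
  have hTlin : ∀ m n : ℝ, m • T a + n • T b = T (m • a + n • b) := by
    intro m n
    have : det2 u (m • a + n • b) = m * det2 u a + n * det2 u b := by simp [det2]; ring
    simp only [hT, this]
    ext <;> simp <;> ring
  have hdet : det2 (T a) (T b) = s * det2 a b := by
    have e1 : det2 (T a) (T b) = det2 a b * (1 + det2 u (v' - v) / det2 u v) := by
      simp only [hT]
      field_simp
      simp only [det2, Prod.fst_add, Prod.snd_add, Prod.smul_fst, Prod.smul_snd, smul_eq_mul,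
        Prod.fst_sub, Prod.snd_sub] at huv ⊢
      field_simp
      ring
    have e2 : det2 u (v' - v) = (s - 1) * det2 u v := by
      simp [hv', det2]; ring
    rw [e1, e2]; field_simp; ring
  have hTadm : IsAdmissible (ballD p) (T a) (T b) := by
    rintro z ⟨⟨m, n, rfl⟩, hz⟩
    rw [mem_ballD_iff hp, hTlin] at hz
    rw [hTlin]
    set w := (m : ℝ) • a + (n : ℝ) • b with hw
    have hwL : w ∈ latticeSet a b := ⟨m, n, hw⟩
    by_cases hw0 : w = 0
    · rw [hw0]; simp [hT, det2]
    exfalso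
    have hw1 : 1 ≤ nrm p w := by
      by_contra! h
      exact hw0 (hadm ⟨hwL, (mem_ballD_iff hp w).2 h⟩)
    rcases hw1.lt_or_eq with h1 | h1
    · have h2 := hr w hwL h1
      have h3 := nrm_add hp (T w) (-((det2 u w / det2 u v) • (v' - v)))
      have e : T w + -((det2 u w / det2 u v) • (v' - v)) = w := by simp [hT]
      rw [e, nrm_neg hp, nrm_smul hp, abs_div] at h3
      have h4 : |det2 u w| / |det2 u v| ≤ C * nrm p w := by
        rw [hC, div_mul_eq_mul_div]
        gcongr
        exact det2_bound hp u w
      have h5 : |det2 u w| / |det2 u v| * nrm p (v' - v) ≤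
          C * nrm p w * ((1 - 1 / r) / (C + 1)) := by
        apply mul_le_mul h4 hδ (nrm_nonneg _ _)
        have := nrm_nonneg p w
        positivity
      have h6 : C * nrm p w * ((1 - 1 / r) / (C + 1)) ≤ nrm p w * (1 - 1 / r) := by
        have h7 : C / (C + 1) ≤ 1 := by rw [div_le_one (by linarith)]; linarith
        have h8 : 0 ≤ 1 - 1 / r := by
          rw [sub_nonneg, div_le_one (by linarith)]; exact hr1.le
        have h9 : 0 ≤ nrm p w * (1 - 1 / r) := mul_nonneg (nrm_nonneg _ _) h8
        calc C * nrm p w * ((1 - 1 / r) / (C + 1)) = C / (C + 1) * (nrm p w * (1 - 1 / r)) := by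
              ring
          _ ≤ 1 * (nrm p w * (1 - 1 / r)) := by gcongr
          _ = _ := one_mul _
      have h10 : 1 ≤ nrm p w * (1 / r) := by
        rw [mul_one_div, le_div_iff₀ (by linarith)]; linarith
      linarith
    · have hTu : T u = u := by
        have : det2 u u = 0 := by simp [det2]; ring
        simp [hT, this]
      have hTv : T v = v' := by simp [hT, div_self huv]
      have hTneg : ∀ x, T (-x) = -T x := by
        intro x
        have : det2 u (-x) = -det2 u x := by simp [det2]; ring
        simp only [hT, this]
        ext <;> simp <;> ring
      have hc := hcon w ⟨hwL, (mem_curveC_iff hp w).2 h1.symm⟩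
      have : nrm p (T w) = nrm p w := by
        by_cases c1 : w = u
        · rw [c1, hTu]
        by_cases c2 : w = -u
        · rw [c2, hTneg, hTu]
        by_cases c3 : w = v
        · rw [c3, hTv, hn]
        rw [hc c1 c2 c3, hTneg, hTv, nrm_neg hp, nrm_neg hp, hn]
      linarith
  have hle : ENNReal.ofReal |det2 a b| ≤ ENNReal.ofReal |det2 (T a) (T b)| := by
    rw [hcrit]
    apply sInf_le
    refine ⟨T a, T b, ?_, hTadm, rfl⟩
    rw [li_iff, hdet]
    exact mul_ne_zero hs0.ne' hd
  rw [ENNReal.ofReal_le_ofReal_iff (abs_nonneg _), hdet, abs_mul, abs_of_pos hs0] at hle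
  have : 0 < |det2 a b| := abs_pos.2 hd
  nlinarith

lemma nonzero_of_curve {p : ℝ} (hp : 1 < p) {x : ℝ × ℝ} (hx : nrm p x = 1) : x ≠ 0 := by
  rintro rfl
  have := nrm_smul hp 0 (0 : ℝ × ℝ)
  simp at this; rw [this] at hx; exact zero_ne_one hx

lemma det_ne {p : ℝ} (hp : 1 < p) {x y : ℝ × ℝ} (hx : nrm p x = 1) (hy : nrm p y = 1)
    (h1 : y ≠ x) (h2 : y ≠ -x) : det2 x y ≠ 0 := by
  intro h
  have hx0 := nonzero_of_curve hp hx
  obtain ⟨c, hc⟩ : ∃ c : ℝ, y = c • x := by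
    unfold det2 at h
    by_cases h0 : x.1 = 0
    · have h3 : x.2 ≠ 0 := fun h3 => hx0 (Prod.ext h0 h3)
      refine ⟨y.2 / x.2, ?_⟩
      ext
      · simp; field_simp; linarith
      · simp; field_simp
    · refine ⟨y.1 / x.1, ?_⟩
      ext
      · simp; field_simp
      · simp; field_simp; linarith
  rw [hc, nrm_smul hp, hx, mul_one] at hy
  rcases (abs_eq zero_le_one).1 hy with rfl | rfl
  · exact h1 (by simpa using hc)
  · exact h2 (by simpa using hc)

lemma mod_two {p : ℝ} (hp : 1 < p) {a b : ℝ × ℝ}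
    (hadm : IsAdmissible (ballD p) a b) {m n k l : ℤ}
    (hx : nrm p ((m : ℝ) • a + (n : ℝ) • b) = 1) (hy : nrm p ((k : ℝ) • a + (l : ℝ) • b) = 1)
    (h1 : Even (m + k)) (h2 : Even (n + l)) :
    (m : ℝ) • a + (n : ℝ) • b = (k : ℝ) • a + (l : ℝ) • b ∨
    (m : ℝ) • a + (n : ℝ) • b = -((k : ℝ) • a + (l : ℝ) • b) := by
  by_contra! hcon
  obtain ⟨c1, c2⟩ := hcon
  obtain ⟨i, hi⟩ := h1
  obtain ⟨j, hj⟩ := h2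
  have h3 := nrm_mid hp c1 hx.le hy.le
  have hi' : (m : ℝ) + k = i + i := by exact_mod_cast hi
  have hj' : (n : ℝ) + l = j + j := by exact_mod_cast hj
  have e : (1/2 : ℝ) • ((m : ℝ) • a + (n : ℝ) • b + ((k : ℝ) • a + (l : ℝ) • b)) =
      (i : ℝ) • a + (j : ℝ) • b := by
    have : (m : ℝ) • a + (n : ℝ) • b + ((k : ℝ) • a + (l : ℝ) • b) =
      ((m : ℝ) + k) • a + ((n : ℝ) + l) • b := by module
    rw [this, hi', hj']; module
  have h4 := hadm ⟨⟨i, j, e⟩, (mem_ballD_iff hp _).2 h3⟩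
  rw [Set.mem_singleton_iff, smul_eq_zero] at h4
  rcases h4 with h4 | h4
  · norm_num at h4
  · exact c2 (eq_neg_of_add_eq_zero_left h4)

lemma not_even {p : ℝ} (hp : 1 < p) {a b : ℝ × ℝ}
    (hadm : IsAdmissible (ballD p) a b) {m n : ℤ}
    (hx : nrm p ((m : ℝ) • a + (n : ℝ) • b) = 1) : ¬ (Even m ∧ Even n) := by
  rintro ⟨⟨i, hi⟩, ⟨j, hj⟩⟩
  have hi' : (m : ℝ) = i + i := by exact_mod_cast hi
  have hj' : (n : ℝ) = j + j := by exact_mod_cast hj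
  have e : (m : ℝ) • a + (n : ℝ) • b = (2 : ℝ) • ((i : ℝ) • a + (j : ℝ) • b) := by
    rw [hi', hj']; module
  have h0 := nonzero_of_curve hp hx
  rw [e, nrm_smul hp] at hx
  have h3 : nrm p ((i : ℝ) • a + (j : ℝ) • b) < 1 := by
    rw [abs_of_pos (by norm_num)] at hx; linarith
  have h4 := hadm ⟨⟨i, j, rfl⟩, (mem_ballD_iff hp _).2 h3⟩
  rw [Set.mem_singleton_iff] at h4
  rw [e, h4] at h0; simp at h0

lemma parity {k l mu nu mv nv mw nw : ℤ} (n0 : ¬ (Even k ∧ Even l)) (n1 : ¬ (Even mu ∧ Even nu))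
    (n2 : ¬ (Even mv ∧ Even nv)) (n3 : ¬ (Even mw ∧ Even nw))
    (d1 : ¬ (Even (mv + mu) ∧ Even (nv + nu))) (d2 : ¬ (Even (mw + mu) ∧ Even (nw + nu)))
    (d3 : ¬ (Even (mw + mv) ∧ Even (nw + nv))) :
    (Even (k + mu) ∧ Even (l + nu)) ∨ (Even (k + mv) ∧ Even (l + nv)) ∨
      (Even (k + mw) ∧ Even (l + nw)) := by
  simp only [Int.even_add] at *
  by_cases Even k <;> by_cases Even l <;> by_cases Even mu <;> by_cases Even nu <;>
    by_cases Even mv <;> by_cases Even nv <;> simp_all [-Int.not_even_iff_odd]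

/-- a critical lattice `Λ = ℤa + ℤb` of `D_p` (admissible with covolume
`Δ(D_p)`) has exactly 6 points on the Minkowski curve `|x|^p + |y|^p = 1`. -/
theorem stmt_11 (p : ℝ) (hp : 1 < p) (a b : ℝ × ℝ)
    (hab : LinearIndependent ℝ ![a, b])
    (hadm : IsAdmissible (ballD p) a b)
    (hcrit : ENNReal.ofReal |det2 a b| = criticalDet (ballD p)) :
    (latticeSet a b ∩ curveC p).ncard = 6 := by
  have hd := (li_iff a b).1 hab
  have hneg : ∀ z ∈ latticeSet a b ∩ curveC p, -z ∈ latticeSet a b ∩ curveC p := by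
    rintro z ⟨⟨m, n, rfl⟩, hz⟩
    refine ⟨⟨-m, -n, by push_cast; module⟩, ?_⟩
    rw [mem_curveC_iff hp] at hz ⊢
    rw [nrm_neg hp, hz]
  obtain ⟨u, hu, -⟩ := key hp hd hadm hcrit hd
  have hu1 := (mem_curveC_iff hp u).1 hu.2
  have hu0 := nonzero_of_curve hp hu1
  have hperp : det2 u (-u.2, u.1) ≠ 0 := by
    intro h
    simp only [det2] at h
    apply hu0
    ext
    · simp; nlinarith [sq_nonneg u.1, sq_nonneg u.2]
    · simp; nlinarith [sq_nonneg u.1, sq_nonneg u.2]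
  obtain ⟨v, hv, hvu, hvu', -⟩ := key hp hd hadm hcrit hperp
  have hv1 := (mem_curveC_iff hp v).1 hv.2
  have hv0 := nonzero_of_curve hp hv1
  obtain ⟨w, hw, hwu, hwu', hwv, hwv'⟩ := key hp hd hadm hcrit (det_ne hp hu1 hv1 hvu hvu')
  have hw1 := (mem_curveC_iff hp w).1 hw.2
  have hw0 := nonzero_of_curve hp hw1
  have hS : latticeSet a b ∩ curveC p = {u, -u, v, -v, w, -w} := by
    apply Set.Subset.antisymm
    · rintro z ⟨⟨k, l, rfl⟩, hz⟩
      have hz1 := (mem_curveC_iff hp _).1 hz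
      obtain ⟨mu, nu, rfl⟩ := hu.1
      obtain ⟨mv, nv, rfl⟩ := hv.1
      obtain ⟨mw, nw, rfl⟩ := hw.1
      have n0 := not_even hp hadm hz1
      have n1 := not_even hp hadm hu1
      have n2 := not_even hp hadm hv1
      have n3 := not_even hp hadm hw1
      have d1 : ¬ (Even (mv + mu) ∧ Even (nv + nu)) := fun h =>
        (mod_two hp hadm hv1 hu1 h.1 h.2).elim hvu hvu'
      have d2 : ¬ (Even (mw + mu) ∧ Even (nw + nu)) := fun h =>
        (mod_two hp hadm hw1 hu1 h.1 h.2).elim hwu hwu'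
      have d3 : ¬ (Even (mw + mv) ∧ Even (nw + nv)) := fun h =>
        (mod_two hp hadm hw1 hv1 h.1 h.2).elim hwv hwv'
      have hcase : (Even (k + mu) ∧ Even (l + nu)) ∨ (Even (k + mv) ∧ Even (l + nv)) ∨
          (Even (k + mw) ∧ Even (l + nw)) := by
        exact parity n0 n1 n2 n3 d1 d2 d3
      simp only [Set.mem_insert_iff, Set.mem_singleton_iff]
      rcases hcase with h | h | h
      · rcases mod_two hp hadm hz1 hu1 h.1 h.2 with e | e
        · exact Or.inl e
        · exact Or.inr (Or.inl e)
      · rcases mod_two hp hadm hz1 hv1 h.1 h.2 with e | e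
        · exact Or.inr (Or.inr (Or.inl e))
        · exact Or.inr (Or.inr (Or.inr (Or.inl e)))
      · rcases mod_two hp hadm hz1 hw1 h.1 h.2 with e | e
        · exact Or.inr (Or.inr (Or.inr (Or.inr (Or.inl e))))
        · exact Or.inr (Or.inr (Or.inr (Or.inr (Or.inr e))))
    · intro z hz
      simp only [Set.mem_insert_iff, Set.mem_singleton_iff] at hz
      rcases hz with rfl | rfl | rfl | rfl | rfl | rfl
      · exact hu
      · exact hneg _ hu
      · exact hv
      · exact hneg _ hv
      · exact hw
      · exact hneg _ hw
  have self_neg : ∀ x : ℝ × ℝ, x ≠ 0 → x ≠ -x := fun x hx h => hx (self_eq_neg.1 h)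
  have swap : ∀ x y : ℝ × ℝ, x ≠ -y → -x ≠ y := fun x y h h' => h (by rw [← h', neg_neg])
  rw [hS]
  have q1 := self_neg u hu0
  have q2 := self_neg v hv0
  have q3 := self_neg w hw0
  have r1 := swap _ _ hvu'
  have r2 := swap _ _ hwu'
  have r3 := swap _ _ hwv'
  rw [Set.ncard_insert_of_notMem, Set.ncard_insert_of_notMem, Set.ncard_insert_of_notMem,
    Set.ncard_insert_of_notMem, Set.ncard_pair q3]
  all_goals
    simp only [Set.mem_insert_iff, Set.mem_singleton_iff, not_or, neg_inj]
    grind
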